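/- arXiv:1404.6342 — 3 statements merged into one kernel-verified Lean document; each statement's English description precedes it below -/
import Mathlib

section
/- The modified energy G(t) := E(t) + bγF(t), with E(t) := ‖Bv(t)‖² + γ²‖v'(t)‖² and F(t) := γ⟨v(t), v'(t)⟩, is differentiable on [0,T] and satisfies the identity G'(t) = (−2 + bγ²)‖v'(t)‖² − b⟨v(t), v'(t) + B(Bv(t)) − f(t)⟩ + 2⟨f(t), v'(t)⟩ for all t ∈ [0,T]. -/
open Set RealInnerProductSpace

/-! The identity comes from testing the equation against `v'` and against `v`: the first gives
`E' = 2⟨f, v'⟩ - 2‖v'‖²`, because `B` is symmetric, and the second gives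
`γF' = γ²‖v'‖² - ⟨v, v' + B(Bv) - f⟩`. -/

section

variable {H K : Type*} [NormedAddCommGroup H] [InnerProductSpace ℝ H]
  [NormedAddCommGroup K] [InnerProductSpace ℝ K]
  {v v' : ℝ → H} {a : H} {s : Set ℝ} {t : ℝ}

theorem hasDerivWithinAt_norm_sq_add_mul_norm_sq {B : H →L[ℝ] K} {Badj : K → H}
    (hBadj : ∀ x y, ⟪B x, y⟫ = ⟪x, Badj y⟫) (m : ℝ)
    (hv : HasDerivWithinAt v (v' t) s t) (hv' : HasDerivWithinAt v' a s t) :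
    HasDerivWithinAt (fun τ => ‖B (v τ)‖ ^ 2 + m * ‖v' τ‖ ^ 2)
      (2 * ⟪m • a + Badj (B (v t)), v' t⟫) s t := by
  have hBv : HasDerivWithinAt (fun τ => B (v τ)) (B (v' t)) s t :=
    B.hasFDerivAt.comp_hasDerivWithinAt t hv
  refine (hBv.norm_sq.add (hv'.norm_sq.const_mul m)).congr_deriv ?_
  have move_adjoint : ⟪B (v t), B (v' t)⟫ = ⟪Badj (B (v t)), v' t⟫ := by
    rw [real_inner_comm, hBadj, real_inner_comm]
  rw [move_adjoint, inner_add_left, real_inner_smul_left, real_inner_comm (v' t) a]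
  ring

theorem hasDerivWithinAt_mul_inner (m : ℝ)
    (hv : HasDerivWithinAt v (v' t) s t) (hv' : HasDerivWithinAt v' a s t) :
    HasDerivWithinAt (fun τ => m * ⟪v τ, v' τ⟫) (m * ‖v' t‖ ^ 2 + ⟪v t, m • a⟫) s t := by
  refine ((hv.inner ℝ hv').const_mul m).congr_deriv ?_
  rw [real_inner_self_eq_norm_sq, real_inner_smul_right]
  ring

theorem stmt4_general {B : H →L[ℝ] K} {Badj : K → H} (hBadj : ∀ x y, ⟪B x, y⟫ = ⟪x, Badj y⟫)
    (γ b : ℝ) {f v'' : ℝ → H}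
    (hv : HasDerivWithinAt v (v' t) s t) (hv' : HasDerivWithinAt v' (v'' t) s t)
    (heq : γ ^ 2 • v'' t + v' t + Badj (B (v t)) = f t) :
    HasDerivWithinAt
      (fun τ => ‖B (v τ)‖ ^ 2 + γ ^ 2 * ‖v' τ‖ ^ 2 + b * γ * (γ * ⟪v τ, v' τ⟫))
      ((-2 + b * γ ^ 2) * ‖v' t‖ ^ 2 - b * ⟪v t, v' t + Badj (B (v t)) - f t⟫ +
        2 * ⟪f t, v' t⟫) s t := by
  have energy_deriv : HasDerivWithinAt (fun τ => ‖B (v τ)‖ ^ 2 + γ ^ 2 * ‖v' τ‖ ^ 2)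
      (2 * ⟪f t, v' t⟫ - 2 * ‖v' t‖ ^ 2) s t := by
    refine (hasDerivWithinAt_norm_sq_add_mul_norm_sq hBadj (γ ^ 2) hv hv').congr_deriv ?_
    have force_eq : γ ^ 2 • v'' t + Badj (B (v t)) = f t - v' t := by rw [← heq]; abel
    rw [force_eq, inner_sub_left, real_inner_self_eq_norm_sq, mul_sub]
  have cross_deriv : HasDerivWithinAt (fun τ => γ ^ 2 * ⟪v τ, v' τ⟫)
      (γ ^ 2 * ‖v' t‖ ^ 2 - ⟪v t, v' t + Badj (B (v t)) - f t⟫) s t := by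
    refine (hasDerivWithinAt_mul_inner (γ ^ 2) hv hv').congr_deriv ?_
    have inertia_eq : γ ^ 2 • v'' t = -(v' t + Badj (B (v t)) - f t) := by rw [← heq]; abel
    rw [inertia_eq, inner_neg_right, ← sub_eq_add_neg]
  have scale_cross (τ : ℝ) : b * γ * (γ * ⟪v τ, v' τ⟫) = b * (γ ^ 2 * ⟪v τ, v' τ⟫) := by ring
  simp only [scale_cross]
  exact (energy_deriv.add (cross_deriv.const_mul b)).congr_deriv (by ring)

end

/-- The modified energy `G(t) := E(t) + bγF(t)`, with
`E(t) := ‖Bv(t)‖² + γ²‖v'(t)‖²` and `F(t) := γ⟨v(t), v'(t)⟩`, is differentiable on `[0,T]`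
and satisfies
`G'(t) = (−2 + bγ²)‖v'(t)‖² − b⟨v(t), v'(t) + B(Bv(t)) − f(t)⟩ + 2⟨f(t), v'(t)⟩`
for all `t ∈ [0,T]`. -/
theorem stmt4
    {H : Type*} [NormedAddCommGroup H] [InnerProductSpace ℝ H] [CompleteSpace H]
    (B : H →L[ℝ] H) (hBsym : ∀ x y : H, ⟪B x, y⟫ = ⟪x, B y⟫)
    (γ b T : ℝ) (hγ : 0 < γ) (hb : 0 < b) (hT : 0 < T)
    (f v v' v'' : ℝ → H)
    (hf : ContinuousOn f (Icc (0 : ℝ) T))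
    (hv : ∀ t ∈ Icc (0 : ℝ) T, HasDerivWithinAt v (v' t) (Icc (0 : ℝ) T) t)
    (hv' : ∀ t ∈ Icc (0 : ℝ) T, HasDerivWithinAt v' (v'' t) (Icc (0 : ℝ) T) t)
    (hv'' : ContinuousOn v'' (Icc (0 : ℝ) T))
    (heq : ∀ t ∈ Icc (0 : ℝ) T, γ ^ 2 • v'' t + v' t + B (B (v t)) = f t)
    (E F G : ℝ → ℝ)
    (hE : E = fun t => ‖B (v t)‖ ^ 2 + γ ^ 2 * ‖v' t‖ ^ 2)
    (hF : F = fun t => γ * ⟪v t, v' t⟫)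
    (hG : G = fun t => E t + b * γ * F t) :
    ∀ t ∈ Icc (0 : ℝ) T,
      HasDerivWithinAt G
        ((-2 + b * γ ^ 2) * ‖v' t‖ ^ 2 - b * ⟪v t, v' t + B (B (v t)) - f t⟫ +
          2 * ⟪f t, v' t⟫) (Icc (0 : ℝ) T) t := by
  subst hE hF hG
  exact fun t ht => stmt4_general hBsym γ b (hv t ht) (hv' t ht) (heq t ht)
end

section
/- The modified energy G(t) := E(t) + bγF(t), with E(t) := ‖Bv(t)‖² + γ²‖v'(t)‖², F(t) := γ⟨v(t), v'(t)⟩ and b := min{2/(2γ₁² + c₁ + 1), 1/(2c₁), 1/(γ₁c₁)}, satisfies the differential inequality G'(t) ≤ −(b/2)·E(t) + ((b+2)/(2b))·‖f(t)‖² for all t ∈ [0,T]. -/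
open Set RealInnerProductSpace

/-!
Test the equation `γ² v'' + v' + A v = f`, where `A = B* B`, against `2 v'` and against `v`. The
first test gives `E' = 2⟪v', f⟫ - 2‖v'‖²`, which dissipates only the kinetic part of the energy; the
second gives `(γ² ⟪v, v'⟫)' = γ² ‖v'‖² + ⟪v, f - v'⟫ - ‖B v‖²`, which supplies the missing potential
part. Young's inequality splits `2⟪v', f⟫` with weight `b`; the coercivity of `B` lets the
potential part absorb the products with `v`, and for small `b` the damping absorbs the rest.
-/

section DampedWave

variable {H K : Type*} [NormedAddCommGroup H] [InnerProductSpace ℝ H]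
  [NormedAddCommGroup K] [InnerProductSpace ℝ K]

theorem two_mul_real_inner_le_mul_norm_sq_add {a : ℝ} (ha : 0 < a) (x y : H) :
    2 * ⟪x, y⟫ ≤ a * ‖x‖ ^ 2 + ‖y‖ ^ 2 / a := by
  have square_div_nonneg : 0 ≤ ‖a • x - y‖ ^ 2 / a := by positivity
  have square_div_eq :
      ‖a • x - y‖ ^ 2 / a = a * ‖x‖ ^ 2 - 2 * ⟪x, y⟫ + ‖y‖ ^ 2 / a := by
    rw [norm_sub_sq_real, real_inner_smul_left, norm_smul, mul_pow, Real.norm_eq_abs, sq_abs]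
    field_simp
  linarith

theorem real_inner_le_of_norm_sq_le {c q : ℝ} (hc : 0 < c) {x : H}
    (hx : ‖x‖ ^ 2 ≤ c * q) (y : H) :
    ⟪x, y⟫ ≤ q / 4 + c * ‖y‖ ^ 2 := by
  have young := two_mul_real_inner_le_mul_norm_sq_add (a := 1 / (2 * c)) (by positivity) x y
  have weight_mul_le : 1 / (2 * c) * ‖x‖ ^ 2 ≤ q / 2 := by
    rw [one_div_mul_eq_div, div_le_iff₀ (by positivity)]
    linarith
  linarith

/-- The energy `E` of the damped wave equation, as a function of the state `(x, y) = (v t, v' t)`;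
the operator of the equation is `B* B`, so `‖B x‖²` is the potential energy. -/
def waveEnergy (B : H →L[ℝ] K) (γ : ℝ) (x y : H) : ℝ :=
  ‖B x‖ ^ 2 + γ ^ 2 * ‖y‖ ^ 2

/-- The modified energy `G = E + bγF` of a state `(x, y)`, where `F = γ⟪x, y⟫`: unlike `E`, it
dissipates the potential energy as well. -/
def modifiedWaveEnergy (B : H →L[ℝ] K) (γ b : ℝ) (x y : H) : ℝ :=
  waveEnergy B γ x y + b * γ * (γ * ⟪x, y⟫)

variable {A : H → H} {B : H →L[ℝ] K} {γ b c t : ℝ} {s : Set ℝ} {v v' : ℝ → H} {w g : H}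

theorem hasDerivWithinAt_waveEnergy (hA : ∀ x y, ⟪B x, B y⟫ = ⟪x, A y⟫)
    (hv : HasDerivWithinAt v (v' t) s t) (hv' : HasDerivWithinAt v' w s t)
    (heq : γ ^ 2 • w + v' t + A (v t) = g) :
    HasDerivWithinAt (fun r => waveEnergy B γ (v r) (v' r))
      (2 * ⟪v' t, g⟫ - 2 * ‖v' t‖ ^ 2) s t := by
  have hBv : HasDerivWithinAt (fun r => B (v r)) (B (v' t)) s t :=
    B.hasFDerivAt.comp_hasDerivWithinAt t hv
  refine (hBv.norm_sq.add (hv'.norm_sq.const_mul (γ ^ 2))).congr_deriv ?_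
  rw [← heq, inner_add_right, inner_add_right, real_inner_smul_right, real_inner_self_eq_norm_sq,
    ← hA, real_inner_comm]
  ring

theorem hasDerivWithinAt_sq_mul_inner (hA : ∀ x y, ⟪B x, B y⟫ = ⟪x, A y⟫)
    (hv : HasDerivWithinAt v (v' t) s t) (hv' : HasDerivWithinAt v' w s t)
    (heq : γ ^ 2 • w + v' t + A (v t) = g) :
    HasDerivWithinAt (fun r => γ ^ 2 * ⟪v r, v' r⟫)
      (γ ^ 2 * ‖v' t‖ ^ 2 + ⟪v t, g⟫ - ⟪v t, v' t⟫ - ‖B (v t)‖ ^ 2) s t := by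
  refine ((hv.inner ℝ hv').const_mul (γ ^ 2)).congr_deriv ?_
  rw [← heq, inner_add_right, inner_add_right, real_inner_smul_right, ← hA,
    real_inner_self_eq_norm_sq, real_inner_self_eq_norm_sq]
  ring

theorem hasDerivWithinAt_modifiedWaveEnergy (hA : ∀ x y, ⟪B x, B y⟫ = ⟪x, A y⟫)
    (hv : HasDerivWithinAt v (v' t) s t) (hv' : HasDerivWithinAt v' w s t)
    (heq : γ ^ 2 • w + v' t + A (v t) = g) :
    HasDerivWithinAt (fun r => modifiedWaveEnergy B γ b (v r) (v' r))
      (2 * ⟪v' t, g⟫ - 2 * ‖v' t‖ ^ 2 +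
        b * (γ ^ 2 * ‖v' t‖ ^ 2 + ⟪v t, g⟫ - ⟪v t, v' t⟫ - ‖B (v t)‖ ^ 2)) s t := by
  have regroup : (fun r => modifiedWaveEnergy B γ b (v r) (v' r)) =
      fun r => waveEnergy B γ (v r) (v' r) + b * (γ ^ 2 * ⟪v r, v' r⟫) := by
    ext r
    rw [modifiedWaveEnergy]
    ring
  rw [regroup]
  exact (hasDerivWithinAt_waveEnergy hA hv hv' heq).add
    ((hasDerivWithinAt_sq_mul_inner hA hv hv' heq).const_mul b)

theorem modifiedWaveEnergy_dissipation_le (hc : 0 < c) (hb : 0 < b)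
    (hb_damping : b ≤ 2 / (2 * γ ^ 2 + c + 1)) (hb_forcing : b ≤ 1 / (2 * c))
    {x : H} (hx : ‖x‖ ^ 2 ≤ c * ‖B x‖ ^ 2) (y g : H) :
    2 * ⟪y, g⟫ - 2 * ‖y‖ ^ 2 + b * (γ ^ 2 * ‖y‖ ^ 2 + ⟪x, g⟫ - ⟪x, y⟫ - ‖B x‖ ^ 2) ≤
      -(b / 2) * waveEnergy B γ x y + (b + 2) / (2 * b) * ‖g‖ ^ 2 := by
  have young := two_mul_real_inner_le_mul_norm_sq_add hb y g
  have inner_forcing := real_inner_le_of_norm_sq_le hc hx g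
  have inner_velocity : -⟪x, y⟫ ≤ ‖B x‖ ^ 2 / 4 + c * ‖y‖ ^ 2 := by
    simpa only [inner_neg_right, norm_neg] using real_inner_le_of_norm_sq_le hc hx (-y)
  have damping : b * (2 * γ ^ 2 + c + 1) * ‖y‖ ^ 2 ≤ 2 * ‖y‖ ^ 2 := by
    gcongr
    exact (le_div_iff₀ (by positivity)).mp hb_damping
  have forcing : b * (2 * c) * ‖g‖ ^ 2 ≤ 1 * ‖g‖ ^ 2 := by
    gcongr
    exact (le_div_iff₀ (by positivity)).mp hb_forcing
  have kinetic_nonneg : 0 ≤ b * γ ^ 2 * ‖y‖ ^ 2 := by positivity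
  calc
    _ = 2 * ⟪y, g⟫ + b * (⟪x, g⟫ + -⟪x, y⟫) - 2 * ‖y‖ ^ 2
          + b * γ ^ 2 * ‖y‖ ^ 2 - b * ‖B x‖ ^ 2 := by ring
    _ ≤ b * ‖y‖ ^ 2 + ‖g‖ ^ 2 / b
          + b * (‖B x‖ ^ 2 / 4 + c * ‖g‖ ^ 2 + (‖B x‖ ^ 2 / 4 + c * ‖y‖ ^ 2)) - 2 * ‖y‖ ^ 2
          + b * γ ^ 2 * ‖y‖ ^ 2 - b * ‖B x‖ ^ 2 := by gcongr
    _ ≤ -(b / 2) * (‖B x‖ ^ 2 + γ ^ 2 * ‖y‖ ^ 2) + (‖g‖ ^ 2 / 2 + ‖g‖ ^ 2 / b) := by linarith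
    _ = -(b / 2) * waveEnergy B γ x y + (b + 2) / (2 * b) * ‖g‖ ^ 2 := by
      rw [waveEnergy]
      field_simp

theorem stmt5_general (hA : ∀ x y, ⟪B x, B y⟫ = ⟪x, A y⟫)
    (hc : 0 < c) (hB : ∀ z, ‖z‖ ^ 2 ≤ c * ‖B z‖ ^ 2)
    (hb : 0 < b) (hb_damping : b ≤ 2 / (2 * γ ^ 2 + c + 1)) (hb_forcing : b ≤ 1 / (2 * c))
    (hv : HasDerivWithinAt v (v' t) s t) (hv' : HasDerivWithinAt v' w s t)
    (heq : γ ^ 2 • w + v' t + A (v t) = g) :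
    ∃ G't : ℝ, HasDerivWithinAt (fun r => modifiedWaveEnergy B γ b (v r) (v' r)) G't s t ∧
      G't ≤ -(b / 2) * waveEnergy B γ (v t) (v' t) + (b + 2) / (2 * b) * ‖g‖ ^ 2 :=
  ⟨_, hasDerivWithinAt_modifiedWaveEnergy hA hv hv' heq,
    modifiedWaveEnergy_dissipation_le hc hb hb_damping hb_forcing (hB _) _ _⟩

end DampedWave

/-- The modified energy `G(t) := E(t) + bγF(t)`, with
`E(t) := ‖Bv(t)‖² + γ²‖v'(t)‖²`, `F(t) := γ⟨v(t), v'(t)⟩` and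
`b := min{2/(2γ₁² + c₁ + 1), 1/(2c₁), 1/(γ₁c₁)}`, satisfies the differential inequality
`G'(t) ≤ −(b/2)·E(t) + ((b+2)/(2b))·‖f(t)‖²` for all `t ∈ [0,T]`. -/
theorem stmt5
    {H : Type*} [NormedAddCommGroup H] [InnerProductSpace ℝ H] [CompleteSpace H]
    (B : H →L[ℝ] H) (hBsym : ∀ x y : H, ⟪B x, y⟫ = ⟪x, B y⟫)
    (c₁ : ℝ) (hc₁ : 1 ≤ c₁) (hB : ∀ z : H, ‖z‖ ^ 2 ≤ c₁ * ‖B z‖ ^ 2)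
    (γ₁ γ T : ℝ) (hγ₁ : 0 < γ₁) (hγ : γ ∈ Ioc 0 γ₁) (hT : 0 < T)
    (f v v' v'' : ℝ → H)
    (hf : ContinuousOn f (Icc (0 : ℝ) T))
    (hv : ∀ t ∈ Icc (0 : ℝ) T, HasDerivWithinAt v (v' t) (Icc (0 : ℝ) T) t)
    (hv' : ∀ t ∈ Icc (0 : ℝ) T, HasDerivWithinAt v' (v'' t) (Icc (0 : ℝ) T) t)
    (hv'' : ContinuousOn v'' (Icc (0 : ℝ) T))
    (heq : ∀ t ∈ Icc (0 : ℝ) T, γ ^ 2 • v'' t + v' t + B (B (v t)) = f t)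
    (b : ℝ)
    (hb : b = min (2 / (2 * γ₁ ^ 2 + c₁ + 1)) (min (1 / (2 * c₁)) (1 / (γ₁ * c₁))))
    (E F G : ℝ → ℝ)
    (hE : E = fun t => ‖B (v t)‖ ^ 2 + γ ^ 2 * ‖v' t‖ ^ 2)
    (hF : F = fun t => γ * ⟪v t, v' t⟫)
    (hG : G = fun t => E t + b * γ * F t) :
    ∀ t ∈ Icc (0 : ℝ) T, ∃ G't : ℝ,
      HasDerivWithinAt G G't (Icc (0 : ℝ) T) t ∧
      G't ≤ -(b / 2) * E t + ((b + 2) / (2 * b)) * ‖f t‖ ^ 2 := by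
  have hc₁_pos : 0 < c₁ := one_pos.trans_le hc₁
  have hb_pos : 0 < b := by rw [hb]; positivity
  have hb_damping : b ≤ 2 / (2 * γ ^ 2 + c₁ + 1) := calc
    b ≤ 2 / (2 * γ₁ ^ 2 + c₁ + 1) := hb.trans_le (min_le_left _ _)
    _ ≤ 2 / (2 * γ ^ 2 + c₁ + 1) := by
      have := hγ.1
      gcongr
      exact hγ.2
  have hb_forcing : b ≤ 1 / (2 * c₁) :=
    hb.trans_le ((min_le_right _ _).trans (min_le_left _ _))
  subst hG hE hF
  exact fun t ht => stmt5_general (A := fun x => B (B x)) (fun x y => hBsym x (B y)) hc₁_pos hB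
    hb_pos hb_damping hb_forcing (hv t ht) (hv' t ht) (heq t ht)
end

section
/- Assume f ≡ 0, i.e. γ²v''(t) + v'(t) + B(Bv(t)) = 0 on [0,T]. With b := min{2/(2γ₁² + c₁ + 1), 1/(2c₁), 1/(γ₁c₁)} and ω := b/(2 + c₁bγ₁), the energy E(t) := ‖Bv(t)‖² + γ²‖v'(t)‖² decays exponentially: E(t) ≤ (2 + c₁bγ₁)·e^{−ωt}·E(0) for all t ∈ [0,T], with decay rate ω and prefactor 2 + c₁bγ₁ depending only on c₁ and γ₁, hence uniform with respect to γ ∈ (0,γ₁]. -/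
open Set RealInnerProductSpace

/-!
The energy identity `E' = -2‖v'‖²` controls only the velocity. Adding the mixed term `bγ²⟪v, v'⟫`,
whose derivative `b(γ²‖v'‖² - ⟪v, v'⟫ - ‖Bv‖²)` also dissipates `‖Bv‖²`, gives a functional `F` with
`F' ≤ -(b/2) E`. For small `b` it is comparable to the energy, `E ≤ 2F ≤ (2 + c₁bγ₁) E`, so
Grönwall's inequality for `F` yields exponential decay of `E`.
-/

section Lyapunov

theorem le_mul_exp_of_hasDerivWithinAt_le {F F' : ℝ → ℝ} {a T K : ℝ}
    (hF : ∀ t ∈ Icc a T, HasDerivWithinAt F (F' t) (Icc a T) t)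
    (hF' : ∀ t ∈ Icc a T, F' t ≤ K * F t) {t : ℝ} (ht : t ∈ Icc a T) :
    F t ≤ F a * Real.exp (K * (t - a)) := by
  rw [← gronwallBound_ε0]
  refine le_gronwallBound_of_liminf_deriv_right_le
    (fun s hs => (hF s hs).continuousWithinAt) (fun s hs r hr => ?_) le_rfl
    (fun s hs => (hF' s (Ico_subset_Icc_self hs)).trans_eq (add_zero _).symm) t ht
  have hright : HasDerivWithinAt F (F' s) (Ici s) s :=
    (hF s (Ico_subset_Icc_self hs)).mono_of_mem_nhdsWithin (Icc_mem_nhdsGE_of_mem hs)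
  exact hright.liminf_right_slope_le hr

theorem le_mul_exp_of_lyapunov {E F F' : ℝ → ℝ} {a T k m M : ℝ}
    (hk : 0 ≤ k) (hm : 0 ≤ m) (hM : 0 < M)
    (hEF : ∀ t ∈ Icc a T, E t ≤ m * F t) (hFE : ∀ t ∈ Icc a T, F t ≤ M * E t)
    (hF : ∀ t ∈ Icc a T, HasDerivWithinAt F (F' t) (Icc a T) t)
    (hF' : ∀ t ∈ Icc a T, F' t ≤ -k * E t) {t : ℝ} (ht : t ∈ Icc a T) :
    E t ≤ m * M * Real.exp (-(k / M) * (t - a)) * E a := by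
  have hF'F : ∀ s ∈ Icc a T, F' s ≤ -(k / M) * F s := fun s hs => by
    have hFE_scaled : k / M * F s ≤ k / M * (M * E s) := by gcongr; exact hFE s hs
    have hcancel : k / M * (M * E s) = k * E s := by field_simp
    linarith [hF' s hs]
  calc E t ≤ m * F t := hEF t ht
    _ ≤ m * (F a * Real.exp (-(k / M) * (t - a))) := by
        gcongr
        exact le_mul_exp_of_hasDerivWithinAt_le hF hF'F ht
    _ ≤ m * (M * E a * Real.exp (-(k / M) * (t - a))) := by
        gcongr
        exact hFE a (left_mem_Icc.2 (ht.1.trans ht.2))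
    _ = m * M * Real.exp (-(k / M) * (t - a)) * E a := by ring

end Lyapunov

section Energy

variable {H K : Type*} [NormedAddCommGroup H] [InnerProductSpace ℝ H]
  [NormedAddCommGroup K] [InnerProductSpace ℝ K]

theorem two_mul_mul_abs_real_inner_le (x y : H) {ε : ℝ} (hε : 0 ≤ ε) :
    2 * ε * |⟪x, y⟫| ≤ ‖x‖ ^ 2 + ε ^ 2 * ‖y‖ ^ 2 :=
  calc 2 * ε * |⟪x, y⟫| ≤ 2 * ε * (‖x‖ * ‖y‖) := by
        gcongr
        exact abs_real_inner_le_norm x y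
    _ ≤ ‖x‖ ^ 2 + ε ^ 2 * ‖y‖ ^ 2 := by linarith [sq_nonneg (‖x‖ - ε * ‖y‖)]

/-- The energy `‖Bx‖² + γ²‖y‖²` of the damped wave equation at position `x` and velocity `y`. -/
def energy (B : H →L[ℝ] K) (γ : ℝ) (x y : H) : ℝ :=
  ‖B x‖ ^ 2 + γ ^ 2 * ‖y‖ ^ 2

/-- The energy perturbed by `b` times the mixed term `γ²⟪x, y⟫`: the Lyapunov functional of the
damped wave equation. -/
def modifiedEnergy (B : H →L[ℝ] K) (γ b : ℝ) (x y : H) : ℝ :=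
  energy B γ x y + b * (γ ^ 2 * ⟪x, y⟫)

variable {B : H →L[ℝ] K} {γ γ₁ b c : ℝ} {x y : H}

theorem energy_nonneg : 0 ≤ energy B γ x y := by
  unfold energy
  positivity

theorem norm_sq_add_le_mul_energy (hc : 1 ≤ c) (hx : ‖x‖ ^ 2 ≤ c * ‖B x‖ ^ 2) :
    ‖x‖ ^ 2 + γ ^ 2 * ‖y‖ ^ 2 ≤ c * energy B γ x y := by
  have hy : γ ^ 2 * ‖y‖ ^ 2 ≤ c * (γ ^ 2 * ‖y‖ ^ 2) :=
    le_mul_of_one_le_left (by positivity) hc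
  unfold energy
  linarith

theorem abs_sq_mul_inner_le_mul_energy (hγ : γ ∈ Icc 0 γ₁) (hc : 1 ≤ c)
    (hx : ‖x‖ ^ 2 ≤ c * ‖B x‖ ^ 2) :
    |γ ^ 2 * ⟪x, y⟫| ≤ γ₁ * c / 2 * energy B γ x y := by
  have hγ0 : 0 ≤ γ := hγ.1
  have hE : 0 ≤ c * energy B γ x y := mul_nonneg (by linarith) energy_nonneg
  calc |γ ^ 2 * ⟪x, y⟫| = γ / 2 * (2 * γ * |⟪x, y⟫|) := by
        rw [abs_mul, abs_sq]
        ring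
    _ ≤ γ / 2 * (‖x‖ ^ 2 + γ ^ 2 * ‖y‖ ^ 2) := by
        gcongr
        exact two_mul_mul_abs_real_inner_le x y hγ0
    _ ≤ γ / 2 * (c * energy B γ x y) := by
        gcongr
        exact norm_sq_add_le_mul_energy hc hx
    _ ≤ γ₁ / 2 * (c * energy B γ x y) := by
        gcongr
        exact hγ.2
    _ = γ₁ * c / 2 * energy B γ x y := by ring

theorem energy_le_two_mul_modifiedEnergy (hγ : γ ∈ Icc 0 γ₁) (hc : 1 ≤ c)
    (hx : ‖x‖ ^ 2 ≤ c * ‖B x‖ ^ 2) (hb : 0 ≤ b) (hbγ : b * (γ₁ * c) ≤ 1) :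
    energy B γ x y ≤ 2 * modifiedEnergy B γ b x y := by
  have hmixed : b * -(γ₁ * c / 2 * energy B γ x y) ≤ b * (γ ^ 2 * ⟪x, y⟫) :=
    mul_le_mul_of_nonneg_left (neg_le_of_abs_le (abs_sq_mul_inner_le_mul_energy hγ hc hx)) hb
  have hsmall : b * (γ₁ * c) * energy B γ x y ≤ 1 * energy B γ x y :=
    mul_le_mul_of_nonneg_right hbγ energy_nonneg
  unfold modifiedEnergy
  linarith

theorem modifiedEnergy_le_mul_energy (hγ : γ ∈ Icc 0 γ₁) (hc : 1 ≤ c)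
    (hx : ‖x‖ ^ 2 ≤ c * ‖B x‖ ^ 2) (hb : 0 ≤ b) :
    modifiedEnergy B γ b x y ≤ (2 + c * b * γ₁) / 2 * energy B γ x y := by
  have hmixed : b * (γ ^ 2 * ⟪x, y⟫) ≤ b * (γ₁ * c / 2 * energy B γ x y) :=
    mul_le_mul_of_nonneg_left (le_of_abs_le (abs_sq_mul_inner_le_mul_energy hγ hc hx)) hb
  unfold modifiedEnergy
  linarith

theorem neg_inner_le_of_norm_sq_le (hc : 0 < c) (hx : ‖x‖ ^ 2 ≤ c * ‖B x‖ ^ 2) :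
    -⟪x, y⟫ ≤ (‖B x‖ ^ 2 + c * ‖y‖ ^ 2) / 2 := by
  have hyoung : c * (2 * |⟪x, y⟫|) ≤ c * (‖B x‖ ^ 2 + c * ‖y‖ ^ 2) := by
    linarith [two_mul_mul_abs_real_inner_le x y hc.le]
  linarith [le_of_mul_le_mul_left hyoung hc, neg_abs_le ⟪x, y⟫]

theorem dissipation_le_neg_mul_energy (hc : 0 < c) (hx : ‖x‖ ^ 2 ≤ c * ‖B x‖ ^ 2)
    (hb : 0 ≤ b) (hbγ : b * (3 * γ ^ 2 + c) ≤ 4) :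
    -2 * ‖y‖ ^ 2 + b * (γ ^ 2 * ‖y‖ ^ 2 - ⟪x, y⟫ - ‖B x‖ ^ 2) ≤
      -(b / 2) * energy B γ x y := by
  have hmixed : b * -⟪x, y⟫ ≤ b * ((‖B x‖ ^ 2 + c * ‖y‖ ^ 2) / 2) :=
    mul_le_mul_of_nonneg_left (neg_inner_le_of_norm_sq_le hc hx) hb
  have hsmall : b * (3 * γ ^ 2 + c) * ‖y‖ ^ 2 ≤ 4 * ‖y‖ ^ 2 := by gcongr
  unfold energy
  linarith

/-- `A` stands for `B* B`, specified through its bilinear form. -/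
theorem hasDerivWithinAt_modifiedEnergy {A : H → H} (hA : ∀ x y : H, ⟪A x, y⟫ = ⟪B x, B y⟫)
    {v v' : ℝ → H} {a : H} {s : Set ℝ} {t : ℝ} (hv : HasDerivWithinAt v (v' t) s t)
    (hv' : HasDerivWithinAt v' a s t) (heq : γ ^ 2 • a + v' t + A (v t) = 0) :
    HasDerivWithinAt (fun τ => modifiedEnergy B γ b (v τ) (v' τ))
      (-2 * ‖v' t‖ ^ 2 + b * (γ ^ 2 * ‖v' t‖ ^ 2 - ⟪v t, v' t⟫ - ‖B (v t)‖ ^ 2)) s t := by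
  have hderiv := ((B.hasFDerivAt.comp_hasDerivWithinAt t hv).norm_sq.add
    (hv'.norm_sq.const_mul (γ ^ 2))).add (((hv.inner ℝ hv').const_mul (γ ^ 2)).const_mul b)
  have inner_eq (z : H) : γ ^ 2 * ⟪z, a⟫ + ⟪z, v' t⟫ + ⟪B (v t), B z⟫ = 0 := by
    rw [← hA, real_inner_comm z (A (v t)), ← real_inner_smul_right,
      ← inner_add_right, ← inner_add_right, heq, inner_zero_right]
  have hvelocity := inner_eq (v' t)
  have hposition := inner_eq (v t)
  rw [real_inner_self_eq_norm_sq] at hvelocity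
  rw [real_inner_self_eq_norm_sq] at hposition
  refine hderiv.congr_deriv ?_
  simp only [Function.comp_apply, real_inner_self_eq_norm_sq]
  linear_combination 2 * hvelocity + b * hposition

theorem stmt10_general {A : H → H} (hA : ∀ x y : H, ⟪A x, y⟫ = ⟪B x, B y⟫)
    (hc : 1 ≤ c) (hB : ∀ z : H, ‖z‖ ^ 2 ≤ c * ‖B z‖ ^ 2) (hγ : γ ∈ Icc 0 γ₁)
    {T : ℝ} {v v' v'' : ℝ → H}
    (hv : ∀ t ∈ Icc 0 T, HasDerivWithinAt v (v' t) (Icc 0 T) t)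
    (hv' : ∀ t ∈ Icc 0 T, HasDerivWithinAt v' (v'' t) (Icc 0 T) t)
    (heq : ∀ t ∈ Icc 0 T, γ ^ 2 • v'' t + v' t + A (v t) = 0)
    (hb : 0 ≤ b) (hb_diss : b * (3 * γ₁ ^ 2 + c) ≤ 4) (hb_equiv : b * (γ₁ * c) ≤ 1)
    {t : ℝ} (ht : t ∈ Icc 0 T) :
    energy B γ (v t) (v' t) ≤ (2 + c * b * γ₁) * Real.exp (-(b / (2 + c * b * γ₁)) * t) *
      energy B γ (v 0) (v' 0) := by
  have hc0 : 0 < c := zero_lt_one.trans_le hc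
  have hγ0 : 0 ≤ γ := hγ.1
  have hγ₁ : 0 ≤ γ₁ := hγ0.trans hγ.2
  have hM : 0 < 2 + c * b * γ₁ := by positivity
  have hbγ : b * (3 * γ ^ 2 + c) ≤ 4 := by
    refine le_trans ?_ hb_diss
    gcongr
    exact hγ.2
  have hdecay := le_mul_exp_of_lyapunov (E := fun τ => energy B γ (v τ) (v' τ))
    (div_nonneg hb zero_le_two) zero_le_two (half_pos hM)
    (fun τ _ => energy_le_two_mul_modifiedEnergy hγ hc (hB (v τ)) hb hb_equiv)
    (fun τ _ => modifiedEnergy_le_mul_energy hγ hc (hB (v τ)) hb)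
    (fun τ hτ => hasDerivWithinAt_modifiedEnergy hA (hv τ hτ) (hv' τ hτ) (heq τ hτ))
    (fun τ _ => dissipation_le_neg_mul_energy hc0 (hB (v τ)) hb hbγ) ht
  rwa [mul_div_cancel₀ _ two_ne_zero, div_div_div_cancel_right₀ two_ne_zero, sub_zero] at hdecay

end Energy

section MixedWeight

/-- The weight `b` of the mixed term in the modified energy, as a function of the coercivity
constant `c` of `B` and the upper bound `γ` for the inertia parameter. -/
noncomputable def mixedWeight (c γ : ℝ) : ℝ :=
  min (2 / (2 * γ ^ 2 + c + 1)) (min (1 / (2 * c)) (1 / (γ * c)))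

variable {c γ : ℝ}

theorem mixedWeight_nonneg (hc : 0 ≤ c) (hγ : 0 ≤ γ) : 0 ≤ mixedWeight c γ := by
  unfold mixedWeight
  positivity

theorem mixedWeight_mul_le_four (hc : 0 ≤ c) (hγ : 0 ≤ γ) :
    mixedWeight c γ * (3 * γ ^ 2 + c) ≤ 4 := by
  have hle : mixedWeight c γ * (2 * γ ^ 2 + c + 1) ≤ 2 :=
    (le_div_iff₀ (by positivity)).1 (min_le_left _ _)
  calc mixedWeight c γ * (3 * γ ^ 2 + c)
      ≤ mixedWeight c γ * (2 * (2 * γ ^ 2 + c + 1)) :=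
        mul_le_mul_of_nonneg_left (by nlinarith [sq_nonneg γ]) (mixedWeight_nonneg hc hγ)
    _ ≤ 4 := by linarith

theorem mixedWeight_mul_le_one (hc : 0 < c) (hγ : 0 < γ) : mixedWeight c γ * (γ * c) ≤ 1 :=
  (le_div_iff₀ (by positivity)).1 ((min_le_right _ _).trans (min_le_right _ _))

end MixedWeight

/-- Assume `f ≡ 0`, i.e. `γ²v''(t) + v'(t) + B(Bv(t)) = 0` on `[0,T]`.
With `b := min{2/(2γ₁² + c₁ + 1), 1/(2c₁), 1/(γ₁c₁)}` and `ω := b/(2 + c₁bγ₁)`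
(depending only on `c₁` and `γ₁`, hence uniform in `γ ∈ (0,γ₁]`), the energy
`E(t) := ‖Bv(t)‖² + γ²‖v'(t)‖²` decays exponentially:
`E(t) ≤ (2 + c₁bγ₁)·e^{−ωt}·E(0)` for all `t ∈ [0,T]`. -/
theorem stmt10
    {H : Type*} [NormedAddCommGroup H] [InnerProductSpace ℝ H] [CompleteSpace H]
    (B : H →L[ℝ] H) (hBsym : ∀ x y : H, ⟪B x, y⟫ = ⟪x, B y⟫)
    (c₁ : ℝ) (hc₁ : 1 ≤ c₁) (hB : ∀ z : H, ‖z‖ ^ 2 ≤ c₁ * ‖B z‖ ^ 2)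
    (γ₁ γ T : ℝ) (hγ₁ : 0 < γ₁) (hγ : γ ∈ Ioc 0 γ₁) (hT : 0 < T)
    (v v' v'' : ℝ → H)
    (hv : ∀ t ∈ Icc (0 : ℝ) T, HasDerivWithinAt v (v' t) (Icc (0 : ℝ) T) t)
    (hv' : ∀ t ∈ Icc (0 : ℝ) T, HasDerivWithinAt v' (v'' t) (Icc (0 : ℝ) T) t)
    (hv'' : ContinuousOn v'' (Icc (0 : ℝ) T))
    (heq : ∀ t ∈ Icc (0 : ℝ) T, γ ^ 2 • v'' t + v' t + B (B (v t)) = 0)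
    (b ω : ℝ)
    (hb : b = min (2 / (2 * γ₁ ^ 2 + c₁ + 1)) (min (1 / (2 * c₁)) (1 / (γ₁ * c₁))))
    (hω : ω = b / (2 + c₁ * b * γ₁))
    (E : ℝ → ℝ)
    (hE : E = fun t => ‖B (v t)‖ ^ 2 + γ ^ 2 * ‖v' t‖ ^ 2) :
    ∀ t ∈ Icc (0 : ℝ) T,
      E t ≤ (2 + c₁ * b * γ₁) * Real.exp (-ω * t) * E 0 := by
  subst hb hω hE
  have hc : 0 < c₁ := zero_lt_one.trans_le hc₁
  exact fun t ht => stmt10_general (fun x y => hBsym (B x) y) hc₁ hB (Ioc_subset_Icc_self hγ)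
    hv hv' heq (mixedWeight_nonneg hc.le hγ₁.le) (mixedWeight_mul_le_four hc.le hγ₁.le)
    (mixedWeight_mul_le_one hc hγ₁) ht
end
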